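/- arXiv:1802.09303 — 3 statements merged into one kernel-verified Lean document; each statement's English description precedes it below -/
import Mathlib

section
/- Let d ∈ ℝ^m, a ∈ ℝ^m, and δ, γ ∈ ℝ with γ > 0, and define J(α) = ½δ − ½αγ − ½ Σ_{i=1}^m a_i²/(d_i − α). Suppose α₀ ≤ α₁ < min_i d_i satisfy J(α₀) ≥ 0 and J(α₁) ≤ 0. Then there exists exactly one α* ∈ [α₀, α₁] with J(α*) = 0. -/
open Set

section IntermediateValue

variable {α β : Type*} [ConditionallyCompleteLinearOrder α] [TopologicalSpace α] [OrderTopology α]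
  [DenselyOrdered α] [LinearOrder β] [TopologicalSpace β] [OrderClosedTopology β]

theorem existsUnique_mem_uIcc_eq_of_continuousOn_of_injOn {f : α → β} {x y : α} {c : β}
    (hcont : ContinuousOn f (uIcc x y)) (hinj : InjOn f (uIcc x y)) (hc : c ∈ uIcc (f x) (f y)) :
    ∃! z, z ∈ uIcc x y ∧ f z = c := by
  obtain ⟨z, hz, hfz⟩ := intermediate_value_uIcc hcont hc
  exact ⟨z, ⟨hz, hfz⟩, fun z' ⟨hz', hfz'⟩ => hinj hz' hz (hfz'.trans hfz.symm)⟩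

end IntermediateValue

section SecularFunction

variable {ι 𝕜 : Type*} [Field 𝕜]

/-- The secular function `x ↦ c - b x - ∑ i ∈ s, w i / (d i - x)`, with weights `w` and poles `d`.
The function `J` of the paper has `c = δ / 2`, `b = γ / 2` and `w i = a i ^ 2 / 2`.
A term of the sum takes the junk value `0` at its pole `x = d i`. -/
def secularFunction (s : Finset ι) (w d : ι → 𝕜) (c b x : 𝕜) : 𝕜 :=
  c - b * x - ∑ i ∈ s, w i / (d i - x)

theorem continuousOn_secularFunction [TopologicalSpace 𝕜] [IsTopologicalDivisionRing 𝕜]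
    (s : Finset ι) (w d : ι → 𝕜) (c b : 𝕜) :
    ContinuousOn (secularFunction s w d c b) {x | ∀ i ∈ s, x ≠ d i} := by
  have hsum : ContinuousOn (fun x => ∑ i ∈ s, w i / (d i - x)) {x | ∀ i ∈ s, x ≠ d i} :=
    continuousOn_finsetSum s fun i hi =>
      continuousOn_const.div (by fun_prop) fun _ hx => sub_ne_zero.2 (hx i hi).symm
  exact ContinuousOn.sub (by fun_prop) hsum

variable [LinearOrder 𝕜] [IsStrictOrderedRing 𝕜]

theorem monotoneOn_div_sub {w : 𝕜} (hw : 0 ≤ w) (d : 𝕜) :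
    MonotoneOn (fun x => w / (d - x)) (Iio d) := fun _ _ _ hy hxy =>
  div_le_div_of_nonneg_left hw (sub_pos.2 hy) (sub_le_sub_left hxy d)

theorem strictAntiOn_secularFunction {s : Finset ι} {w : ι → 𝕜} (hw : ∀ i ∈ s, 0 ≤ w i)
    (d : ι → 𝕜) (c : 𝕜) {b : 𝕜} (hb : 0 < b) :
    StrictAntiOn (secularFunction s w d c b) {x | ∀ i ∈ s, x < d i} := by
  intro x hx y hy hxy
  have hlinear : c - b * y < c - b * x := by gcongr
  have hsum : ∑ i ∈ s, w i / (d i - x) ≤ ∑ i ∈ s, w i / (d i - y) :=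
    Finset.sum_le_sum fun i hi => monotoneOn_div_sub (hw i hi) (d i) (hx i hi) (hy i hi) hxy.le
  unfold secularFunction
  linarith

end SecularFunction

/-- existence and uniqueness of the root of `J` in Theorem 1(ii) of the
paper. For `γ > 0` and `J(α) = ½δ − ½αγ − ½ Σ_i a_i²/(d_i − α)`, if
`α₀ ≤ α₁ < min_i d_i`, `J(α₀) ≥ 0` and `J(α₁) ≤ 0`, then there is exactly one
`α* ∈ [α₀, α₁]` with `J(α*) = 0`. -/
theorem stmt_10 {m : ℕ} (d a : Fin m → ℝ) (δ γ : ℝ) (hγ : 0 < γ)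
    (J : ℝ → ℝ)
    (hJ : ∀ α : ℝ, J α = δ / 2 - α * γ / 2 - (1 / 2) * ∑ i, (a i) ^ 2 / (d i - α))
    (α₀ α₁ : ℝ) (h01 : α₀ ≤ α₁) (h1d : ∀ i, α₁ < d i)
    (h0 : 0 ≤ J α₀) (h1 : J α₁ ≤ 0) :
    ∃! α : ℝ, α ∈ Set.Icc α₀ α₁ ∧ J α = 0 := by
  have hJ_eq : J = secularFunction Finset.univ (fun i => a i ^ 2 / 2) d (δ / 2) (γ / 2) := by
    funext α
    rw [hJ, secularFunction, Finset.mul_sum]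
    congr 1
    · ring
    · exact Finset.sum_congr rfl fun i _ => by ring
  have hlt : Icc α₀ α₁ ⊆ {x | ∀ i ∈ Finset.univ, x < d i} :=
    fun _ hx i _ => hx.2.trans_lt (h1d i)
  have hcont : ContinuousOn J (Icc α₀ α₁) := by
    rw [hJ_eq]
    exact (continuousOn_secularFunction _ _ _ _ _).mono fun x hx i hi => (hlt hx i hi).ne
  have hanti : StrictAntiOn J (Icc α₀ α₁) := by
    rw [hJ_eq]
    exact (strictAntiOn_secularFunction (fun _ _ => by positivity) _ _ (half_pos hγ)).mono hlt
  rw [← uIcc_of_le h01] at hcont hanti ⊢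
  exact existsUnique_mem_uIcc_eq_of_continuousOn_of_injOn hcont hanti.injOn (mem_uIcc_of_ge h1 h0)
end

section
/- Let L̂ ∈ ℝ and L : ℝ^m → ℝ. Let y⁰, y¹, …, y^m ∈ ℝ^m be one full cycle of coordinate descent with bound constraint y ≥ L̂ componentwise: for each j = 1,…,m, y^j = y^{j−1} + β_j e_j, where β_j is a global minimizer of the one-dimensional subproblem min{L(y^{j−1} + α e_j) : (y^{j−1})_j + α ≥ L̂}, and assume each of these m one-dimensional subproblems has a unique global minimizer. Also assume y⁰ ≥ L̂ componentwise. If L(y^m) = L(y⁰), then y^m = y⁰ and y⁰ is a coordinate-wise minimum: for every i ∈ {1,…,m} and every α ∈ ℝ with (y⁰)_i + α ≥ L̂, one has L(y⁰) ≤ L(y⁰ + α e_i). -/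
/-!
Each step of a cycle replaces the current point by the unique minimizer of `L` over a slice that
contains the current point, so the step either leaves the point in place or strictly decreases `L`.
If `L` has not decreased after the whole cycle, every step left the point in place. The starting
point is then the minimizer found in each step, that is, a coordinate-wise minimum.
-/

/-- `a` is the unique global minimizer of `f` on `s`. The strict inequality encodes minimality and
uniqueness at once; unlike in `IsMinOn`, the point `a` has to lie in `s`. -/
def IsUniqueMinOn {X P : Type*} [Preorder P] (f : X → P) (s : Set X) (a : X) : Prop :=
  a ∈ s ∧ ∀ z ∈ s, z ≠ a → f a < f z

namespace IsUniqueMinOn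

variable {X P : Type*} {f : X → P} {s : Set X} {a z : X}

theorem eq_or_lt [Preorder P] (h : IsUniqueMinOn f s a) (hz : z ∈ s) : a = z ∨ f a < f z :=
  (eq_or_ne z a).imp Eq.symm (h.2 z hz)

theorem isMinOn [Preorder P] (h : IsUniqueMinOn f s a) : IsMinOn f s a := fun _ hz =>
  (h.eq_or_lt hz).elim (fun haz => haz ▸ le_rfl) le_of_lt

theorem of_isMinOn [PartialOrder P] (ha : a ∈ s) (hmin : IsMinOn f s a)
    (huniq : ∀ z ∈ s, f z = f a → z = a) : IsUniqueMinOn f s a :=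
  ⟨ha, fun z hz hza => (hmin hz).lt_of_ne fun hfaz => hza (huniq z hz hfaz.symm)⟩

end IsUniqueMinOn

theorem forall_eq_zero_or_lt_of_step {X P : Type*} [Preorder P] {f : X → P} {x : ℕ → X} {m : ℕ}
    (hstep : ∀ k < m, x (k + 1) = x k ∨ f (x (k + 1)) < f (x k)) :
    (∀ k ≤ m, x k = x 0) ∨ f (x m) < f (x 0) := by
  induction m with
  | zero => exact .inl fun k hk => by rw [Nat.le_zero.mp hk]
  | succ n ih =>
    rcases ih fun k hk => hstep k (hk.trans n.lt_succ_self) with hconst | hlt <;>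
      rcases hstep n n.lt_succ_self with hstay | hdrop
    · refine .inl fun k hk => ?_
      rcases Nat.le_succ_iff.mp hk with hkn | rfl
      · exact hconst k hkn
      · exact hstay.trans (hconst n le_rfl)
    · exact .inr (hconst n le_rfl ▸ hdrop)
    · exact .inr (hstay ▸ hlt)
    · exact .inr (hdrop.trans hlt)

/-- The feasible set of the `i`-th coordinate subproblem at `y`: the points obtained from `y` by
giving the `i`-th coordinate a value in the constraint set `S i`. The other coordinates of `y` are
not required to satisfy their constraints. -/
def coordinateSlice {ι : Type*} [DecidableEq ι] {E : ι → Type*} (S : ∀ i, Set (E i))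
    (y : ∀ i, E i) (i : ι) : Set (∀ i, E i) :=
  Function.update y i '' S i

section coordinateSlice

variable {ι : Type*} [DecidableEq ι]

theorem self_mem_coordinateSlice {E : ι → Type*} {S : ∀ i, Set (E i)} {y : ∀ i, E i} {i : ι}
    (hy : y i ∈ S i) : y ∈ coordinateSlice S y i :=
  ⟨y i, hy, Function.update_eq_self i y⟩

theorem mem_univ_pi_of_mem_coordinateSlice {E : ι → Type*} {S : ∀ i, Set (E i)}
    {y z : ∀ i, E i} {i : ι} (hy : y ∈ Set.univ.pi S) (hz : z ∈ coordinateSlice S y i) :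
    z ∈ Set.univ.pi S := by
  obtain ⟨a, ha, rfl⟩ := hz
  exact (Set.update_mem_pi_iff_of_mem hy).mpr fun _ => ha

theorem mem_coordinateSlice_iff_add_smul_single {R : Type*} [NonAssocRing R] {S : ι → Set R}
    {y z : ι → R} {i : ι} :
    z ∈ coordinateSlice S y i ↔ ∃ α, y i + α ∈ S i ∧ y + α • Pi.single i 1 = z := by
  have update_eq (α : R) : y + α • Pi.single i 1 = Function.update y i (y i + α) := by
    ext j
    obtain rfl | hj := eq_or_ne j i <;> simp [*]
  simp only [update_eq, coordinateSlice, Set.mem_image]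
  exact (Equiv.addLeft (y i)).surjective.exists

theorem isUniqueMinOn_coordinateSlice_add_smul_single {R P : Type*} [NonAssocRing R]
    [PartialOrder P] {S : ι → Set R} {L : (ι → R) → P} {y : ι → R} {i : ι} {β : R}
    (hfeas : y i + β ∈ S i)
    (hmin : ∀ α, y i + α ∈ S i → L (y + β • Pi.single i 1) ≤ L (y + α • Pi.single i 1))
    (huniq : ∀ α, y i + α ∈ S i →
      L (y + α • Pi.single i 1) = L (y + β • Pi.single i 1) → α = β) :
    IsUniqueMinOn L (coordinateSlice S y i) (y + β • Pi.single i 1) := by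
  refine .of_isMinOn (mem_coordinateSlice_iff_add_smul_single.mpr ⟨β, hfeas, rfl⟩) ?_ ?_ <;>
    intro z hz <;> obtain ⟨α, hα, rfl⟩ := mem_coordinateSlice_iff_add_smul_single.mp hz
  · exact hmin α hα
  · exact fun hL => by rw [huniq α hα hL]

theorem stmt_16_general {E : ι → Type*} {P : Type*} [Preorder P] {S : ∀ i, Set (E i)}
    {L : (∀ i, E i) → P} {m : ℕ} {σ : Fin m → ι} {y : ℕ → ∀ i, E i} (hy0 : y 0 ∈ Set.univ.pi S)
    (hstep : ∀ j : Fin m, IsUniqueMinOn L (coordinateSlice S (y j) (σ j)) (y (j + 1)))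
    (hL : ¬ L (y m) < L (y 0)) :
    y m = y 0 ∧ ∀ j, IsUniqueMinOn L (coordinateSlice S (y 0) (σ j)) (y 0) := by
  have hfeas (k : ℕ) (hk : k ≤ m) : y k ∈ Set.univ.pi S := by
    induction k with
    | zero => exact hy0
    | succ k ih => exact mem_univ_pi_of_mem_coordinateSlice (ih (by lia)) (hstep ⟨k, hk⟩).1
  have hdescent (k : ℕ) (hk : k < m) : y (k + 1) = y k ∨ L (y (k + 1)) < L (y k) :=
    (hstep ⟨k, hk⟩).eq_or_lt (self_mem_coordinateSlice (hfeas k hk.le _ trivial))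
  have hconst : ∀ k ≤ m, y k = y 0 := (forall_eq_zero_or_lt_of_step hdescent).resolve_right hL
  refine ⟨hconst m le_rfl, fun j => ?_⟩
  simpa only [hconst j j.is_le', hconst (j + 1) j.is_lt] using hstep j

end coordinateSlice

/-- the core argument of Proposition 1 of the paper. One full cycle
`y⁰, y¹, …, y^m` of coordinate descent for `min { L(y) : y ≥ L̂ }` updates
`y^j = y^{j−1} + β_j e_j`, where `β_j` globally (and uniquely) solves the
one-dimensional subproblem `min { L(y^{j−1} + α e_j) : (y^{j−1})_j + α ≥ L̂ }`.
If `L(y^m) = L(y⁰)`, then `y^m = y⁰` and `y⁰` is a coordinate-wise minimum. -/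
theorem stmt_16 {m : ℕ} (Lhat : ℝ) (L : (Fin m → ℝ) → ℝ)
    (y : ℕ → (Fin m → ℝ)) (β : Fin m → ℝ)
    (hfeas0 : ∀ i : Fin m, Lhat ≤ y 0 i)
    (hupdate : ∀ j : Fin m, y ((j : ℕ) + 1) = y (j : ℕ) + β j • (Pi.single j 1 : Fin m → ℝ))
    (hβfeas : ∀ j : Fin m, Lhat ≤ y (j : ℕ) j + β j)
    (hβmin : ∀ j : Fin m, ∀ α : ℝ, Lhat ≤ y (j : ℕ) j + α →
        L (y (j : ℕ) + β j • (Pi.single j 1 : Fin m → ℝ)) ≤ L (y (j : ℕ) + α • (Pi.single j 1 : Fin m → ℝ)))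
    (hβuniq : ∀ j : Fin m, ∀ α : ℝ, Lhat ≤ y (j : ℕ) j + α →
        L (y (j : ℕ) + α • (Pi.single j 1 : Fin m → ℝ)) = L (y (j : ℕ) + β j • (Pi.single j 1 : Fin m → ℝ)) →
        α = β j)
    (hLeq : L (y m) = L (y 0)) :
    y m = y 0 ∧
      ∀ (i : Fin m) (α : ℝ), Lhat ≤ y 0 i + α →
        L (y 0) ≤ L (y 0 + α • (Pi.single i 1 : Fin m → ℝ)) := by
  have hstep (j : Fin m) :
      IsUniqueMinOn L (coordinateSlice (fun _ => Set.Ici Lhat) (y j) j) (y (j + 1)) :=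
    hupdate j ▸ isUniqueMinOn_coordinateSlice_add_smul_single (hβfeas j) (hβmin j) (hβuniq j)
  refine (stmt_16_general (σ := id) (fun i _ => hfeas0 i) hstep hLeq.not_lt).imp_right ?_
  exact fun h i α hα => (h i).isMinOn (mem_coordinateSlice_iff_add_smul_single.mpr ⟨α, hα, rfl⟩)
end

section
/- Let A, C be n×n real symmetric matrices with C positive definite, define f(x) = (xᵀAx)/(xᵀCx) for x ≠ 0, and let θ > 0, σ > 0, and integers 1 ≤ k ≤ n and s ≥ 1. Let x ∈ ℝⁿ be nonzero with ‖x‖₀ ≤ s. Suppose that for every subset B of {1,…,n} of cardinality k there is a nonzero vector x^B ∈ ℝⁿ such that: x^B_i = x_i for all i ∉ B; ‖x^B‖₀ ≤ s; (x^B)ᵀC x^B ≤ σ; and x^B globally solves the proximal subproblem, i.e., for every nonzero z ∈ ℝⁿ with z_i = x_i for all i ∉ B and ‖z‖₀ ≤ s, (½(x^B)ᵀA x^B + (θ/2)‖x^B − x‖₂²)/(½(x^B)ᵀC x^B) ≤ (½zᵀAz + (θ/2)‖z − x‖₂²)/(½zᵀCz). Then the average over all C(n,k) such subsets B of f(x^B)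 is at most f(x) − (θ/σ) times the average over all such subsets B of ‖x^B − x‖₂². -/
open Matrix

/-!
The current point competes in every subproblem, where its proximal penalty vanishes. Hence each
solution has penalized ratio at most the current objective value, and the bound `σ` on the
denominator turns the penalty inside the ratio into a decrease of `θ / σ` times the penalty.
-/

open Finset

open scoped BigOperators

section LinearOrderedField

variable {K : Type*} [Field K] [LinearOrder K] [IsStrictOrderedRing K]

lemma div_le_sub_div_mul_of_add_mul_div_le {a c d r θ σ : K} (hθ : 0 ≤ θ) (hd : 0 ≤ d)
    (hc : 0 < c) (hcσ : c ≤ σ) (h : (a + θ * d) / c ≤ r) : a / c ≤ r - θ / σ * d := by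
  have penalty_le : θ / σ * d ≤ θ * d / c := by
    rw [div_mul_eq_mul_div]
    gcongr
  rw [add_div] at h
  linarith

lemma div_le_sub_div_mul_of_isMinOn {E : Type*} {p q d : E → K} {S : Set E} {x y : E} {θ σ : K}
    (hθ : 0 ≤ θ) (hdx : d x = 0) (hdy : 0 ≤ d y) (hqy : 0 < q y) (hqσ : q y ≤ σ) (hx : x ∈ S)
    (hmin : IsMinOn (fun z => (p z + θ * d z) / q z) S y) :
    p y / q y ≤ p x / q x - θ / σ * d y := by
  refine div_le_sub_div_mul_of_add_mul_div_le hθ hdy hqy hqσ ?_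
  simpa only [hdx, mul_zero, add_zero] using isMinOn_iff.mp hmin x hx

theorem stmt_19_general {E κ : Type*} {p q d : E → K} {𝓑 : Finset κ} {S : κ → Set E} {X : κ → E}
    {x : E} {θ σ : K} (hθ : 0 ≤ θ) (h𝓑 : 𝓑.Nonempty) (hd : ∀ z, 0 ≤ d z) (hdx : d x = 0)
    (hq : ∀ b ∈ 𝓑, ∀ z ∈ S b, 0 < q z) (hx : ∀ b ∈ 𝓑, x ∈ S b) (hX : ∀ b ∈ 𝓑, X b ∈ S b)
    (hXσ : ∀ b ∈ 𝓑, q (X b) ≤ σ)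
    (hmin : ∀ b ∈ 𝓑, IsMinOn (fun z => (p z + θ * d z) / q z) (S b) (X b)) :
    𝔼 b ∈ 𝓑, p (X b) / q (X b) ≤ p x / q x - θ / σ * 𝔼 b ∈ 𝓑, d (X b) :=
  calc
    𝔼 b ∈ 𝓑, p (X b) / q (X b) ≤ 𝔼 b ∈ 𝓑, (p x / q x - θ / σ * d (X b)) :=
      expect_le_expect fun b hb =>
        div_le_sub_div_mul_of_isMinOn hθ hdx (hd _) (hq b hb _ (hX b hb)) (hXσ b hb) (hx b hb)
          (hmin b hb)
    _ = p x / q x - θ / σ * 𝔼 b ∈ 𝓑, d (X b) := by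
      rw [expect_sub_distrib, expect_const h𝓑, mul_expect]

end LinearOrderedField

lemma half_mul_add_half_mul_div_half_mul {K : Type*} [Field K] [NeZero (2 : K)] (a c d θ : K) :
    (1 / 2 * a + θ / 2 * d) / (1 / 2 * c) = (a + θ * d) / c := by
  rw [show 1 / 2 * a + θ / 2 * d = 1 / 2 * (a + θ * d) by ring,
    mul_div_mul_left _ _ (one_div_ne_zero two_ne_zero)]

/-- the per-iteration expected descent inequality underlying Theorem 2(i)
of the paper. For each size-`k` working set `B`, let `X B` be a global solution of the
proximal subproblem at `x` (agreeing with `x` off `B`, nonzero, `s`-sparse, with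
`(X B)ᵀC(X B) ≤ σ`). Then the average over all `C(n,k)` subsets `B` of `f(X B)` is at
most `f(x) − (θ/σ)` times the average over all such `B` of `‖X B − x‖₂²`. -/
theorem stmt_19 {n : ℕ} (A C : Matrix (Fin n) (Fin n) ℝ)
    (hA : A.IsHermitian) (hC : C.PosDef)
    (θ σ : ℝ) (hθ : 0 < θ) (hσ : 0 < σ)
    (k s : ℕ) (hk1 : 1 ≤ k) (hkn : k ≤ n) (hs : 1 ≤ s)
    (x : Fin n → ℝ) (hx : x ≠ 0) (hxs : Set.ncard {i | x i ≠ 0} ≤ s)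
    (X : Finset (Fin n) → (Fin n → ℝ))
    (hXne : ∀ B : Finset (Fin n), B.card = k → X B ≠ 0)
    (hXagree : ∀ B : Finset (Fin n), B.card = k → ∀ i ∉ B, X B i = x i)
    (hXs : ∀ B : Finset (Fin n), B.card = k → Set.ncard {i | X B i ≠ 0} ≤ s)
    (hXσ : ∀ B : Finset (Fin n), B.card = k → (X B) ⬝ᵥ (C *ᵥ X B) ≤ σ)
    (hXsol : ∀ B : Finset (Fin n), B.card = k →
        ∀ z : Fin n → ℝ, z ≠ 0 → (∀ i ∉ B, z i = x i) → Set.ncard {i | z i ≠ 0} ≤ s →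
        ((1 / 2) * (X B ⬝ᵥ (A *ᵥ X B)) + (θ / 2) * ((X B - x) ⬝ᵥ (X B - x))) /
            ((1 / 2) * (X B ⬝ᵥ (C *ᵥ X B)))
          ≤ ((1 / 2) * (z ⬝ᵥ (A *ᵥ z)) + (θ / 2) * ((z - x) ⬝ᵥ (z - x))) /
            ((1 / 2) * (z ⬝ᵥ (C *ᵥ z)))) :
    (∑ B ∈ Finset.powersetCard k (Finset.univ : Finset (Fin n)),
        (X B ⬝ᵥ (A *ᵥ X B)) / (X B ⬝ᵥ (C *ᵥ X B))) / (n.choose k)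
      ≤ (x ⬝ᵥ (A *ᵥ x)) / (x ⬝ᵥ (C *ᵥ x))
        - (θ / σ) * ((∑ B ∈ Finset.powersetCard k (Finset.univ : Finset (Fin n)),
            ((X B - x) ⬝ᵥ (X B - x))) / (n.choose k)) := by
  simp only [half_mul_add_half_mul_div_half_mul] at hXsol
  let feasible (B : Finset (Fin n)) : Set (Fin n → ℝ) :=
    {z | z ≠ 0 ∧ (∀ i ∉ B, z i = x i) ∧ Set.ncard {i | z i ≠ 0} ≤ s}
  have hCpos (z : Fin n → ℝ) (hz : z ≠ 0) : 0 < z ⬝ᵥ (C *ᵥ z) := by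
    simpa only [star_trivial] using hC.dotProduct_mulVec_pos hz
  have hdist (z : Fin n → ℝ) : 0 ≤ (z - x) ⬝ᵥ (z - x) := by
    simpa only [star_trivial] using dotProduct_star_self_nonneg (z - x)
  have hblocks : (powersetCard k (univ : Finset (Fin n))).Nonempty :=
    powersetCard_nonempty.mpr (by rwa [card_fin])
  have hdescent := stmt_19_general (p := fun z => z ⬝ᵥ (A *ᵥ z)) (q := fun z => z ⬝ᵥ (C *ᵥ z))
    (d := fun z => (z - x) ⬝ᵥ (z - x)) (S := feasible) (X := X) (x := x) (σ := σ)
    hθ.le hblocks hdist (by simp) (fun _ _ z hz => hCpos z hz.1)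
    (fun _ _ => ⟨hx, fun _ _ => rfl, hxs⟩)
  simp only [mem_powersetCard_univ] at hdescent
  simpa only [expect_eq_sum_div_card, card_powersetCard, card_fin] using
    hdescent (fun B hB => ⟨hXne B hB, hXagree B hB, hXs B hB⟩) hXσ
      fun B hB => isMinOn_iff.mpr fun z ⟨hz, hzx, hzs⟩ => hXsol B hB z hz hzx hzs
end
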